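/- Work in ℝ³ with Γ = {(x,y,z) : x = 0} and Ω = {(x,y,z) : z = 0}, fix p = (p₁,p₂,p₃) with p₁ > 0 and p₃ > 0, let f be the central projection from Γ to Ω through p, and let v₀ = (0,p₂,p₃) be the orthogonal projection of p onto Γ. Then every affine line L contained in Γ that passes through v₀ and is distinct from the vanishing line {(0,y,p₃) : y ∈ ℝ} is mapped by f into an affine line of Ω parallel to the x-axis; consequently, the image lines of all such lines through v₀ are pairwise parallel. -/

import Mathlib

noncomputable section

/-- Points of `ℝ³`; coordinate `0` is `x`, coordinate `1` is `y`, coordinate `2` is `z`. -/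
abbrev E3 : Type := Fin 3 → ℝ

/-- An affine line in `ℝ³`: a nonempty affine subspace whose direction has dimension 1. -/
def IsLine (s : AffineSubspace ℝ E3) : Prop :=
  (s : Set E3).Nonempty ∧ Module.finrank ℝ s.direction = 1

/-- `f` is the central projection through `p` from the plane `Γ = {x = 0}` to the plane
`Ω = {z = 0}`: every point `a` of `Γ` whose `z`-coordinate differs from that of `p`
(i.e. every non-vanishing point of `Γ`) is sent to the (unique) intersection point of the
line through `p` and `a` with `Ω`. -/
def IsCentralProjC (p : E3) (f : E3 → E3) : Prop :=
  ∀ a : E3, a 0 = 0 → a 2 ≠ p 2 →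
    (f a) 2 = 0 ∧ ∃ t : ℝ, f a = p + t • (a - p)

/-!
Both `p` and `v₀` have height `p₃`, so `v₀ - p` is parallel to `Ω`. The images of points of `L` lie
in the plane spanned by `p` and `L`, whose direction is `⟨v₀ - p⟩ ⊔ L.direction`. Since `L` is
transverse to `Ω`, the modular law shows that two points of `Ω` in that plane differ by an element
of `⟨v₀ - p⟩`, and `v₀ - p` points along the `x`-axis.
-/

section CentralProjection

open scoped Affine

variable {k V W P Q : Type*} [AddCommGroup V] [AddCommGroup W] [AddTorsor V P] [AddTorsor W Q]

theorem vsub_mem_span_sup_direction_of_mem_line [Ring k] [Module k V] {L : AffineSubspace k P}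
    {p v x y : P} (hv : v ∈ L) (hx : x ∈ L) (hy : y ∈ line[k, p, x]) :
    y -ᵥ p ∈ (k ∙ (v -ᵥ p)) ⊔ L.direction := by
  obtain ⟨t, rfl⟩ := mem_affineSpan_pair_iff_exists_lineMap_eq.mp hy
  have hxp : x -ᵥ p ∈ (k ∙ (v -ᵥ p)) ⊔ L.direction := by
    rw [← vsub_add_vsub_cancel x v p, add_comm]
    exact Submodule.add_mem_sup (Submodule.mem_span_singleton_self _)
      (AffineSubspace.vsub_mem_direction hx hv)
  rw [AffineMap.lineMap_vsub_left]
  exact Submodule.smul_mem _ t hxp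

theorem vsub_mem_span_of_mem_line_of_map_eq [Ring k] [Module k V] [Module k W] {z : P →ᵃ[k] Q}
    {L : AffineSubspace k P} (hL : Disjoint L.direction z.linear.ker) {p v : P} (hv : v ∈ L)
    (hz : z v = z p) {x₁ x₂ y₁ y₂ : P} (hx₁ : x₁ ∈ L) (hx₂ : x₂ ∈ L) (hy₁ : y₁ ∈ line[k, p, x₁])
    (hy₂ : y₂ ∈ line[k, p, x₂]) (hy : z y₁ = z y₂) :
    y₁ -ᵥ y₂ ∈ k ∙ (v -ᵥ p) := by
  have hspan : k ∙ (v -ᵥ p) ≤ z.linear.ker := by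
    simp [Submodule.span_singleton_le_iff_mem, hz]
  have hker : y₁ -ᵥ y₂ ∈ z.linear.ker := by simp [hy]
  have hplane : y₁ -ᵥ y₂ ∈ (k ∙ (v -ᵥ p)) ⊔ L.direction := by
    rw [← vsub_sub_vsub_cancel_right y₁ y₂ p]
    exact Submodule.sub_mem _ (vsub_mem_span_sup_direction_of_mem_line hv hx₁ hy₁)
      (vsub_mem_span_sup_direction_of_mem_line hv hx₂ hy₂)
  have hinf : ((k ∙ (v -ᵥ p)) ⊔ L.direction) ⊓ z.linear.ker = k ∙ (v -ᵥ p) := by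
    rw [sup_inf_assoc_of_le _ hspan, hL.eq_bot, sup_bot_eq]
  exact hinf ▸ Submodule.mem_inf.mpr ⟨hplane, hker⟩

theorem disjoint_direction_ker_linear_of_map_ne [DivisionRing k] [Module k V] [Module k W]
    {L : AffineSubspace k P} (hL : Module.finrank k L.direction = 1) (z : P →ᵃ[k] Q) {v x : P}
    (hv : v ∈ L) (hx : x ∈ L) (hne : z x ≠ z v) : Disjoint L.direction z.linear.ker := by
  have hatom : IsAtom L.direction := Submodule.isAtom_iff_finrank_eq_one.mpr hL
  refine hatom.not_le_iff_disjoint.mp fun hle ↦ hne ?_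
  simpa [sub_eq_zero] using hle (AffineSubspace.vsub_mem_direction hx hv)

end CentralProjection

open scoped Affine in
theorem IsCentralProjC.apply_mem_line {p : E3} {f : E3 → E3} (hf : IsCentralProjC p f) {a : E3}
    (ha : a 0 = 0) (hap : a 2 ≠ p 2) : f a ∈ line[ℝ, p, a] := by
  obtain ⟨-, t, ht⟩ := hf a ha hap
  exact mem_affineSpan_pair_iff_exists_lineMap_eq.mpr
    ⟨t, by rw [ht, AffineMap.lineMap_apply_module', add_comm]⟩

theorem IsCentralProjC.coord_one_apply_eq {p : E3} {f : E3 → E3} (hf : IsCentralProjC p f)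
    {L : AffineSubspace ℝ E3} (hL : Module.finrank ℝ L.direction = 1) (hLΓ : ∀ x ∈ L, x 0 = 0)
    (hv₀ : (![0, p 1, p 2] : E3) ∈ L) {x y : E3} (hx : x ∈ L) (hy : y ∈ L) (hxp : x 2 ≠ p 2)
    (hyp : y 2 ≠ p 2) : f x 1 = f y 1 := by
  let z : E3 →ᵃ[ℝ] ℝ := (LinearMap.proj 2 : E3 →ₗ[ℝ] ℝ).toAffineMap
  have hdisj : Disjoint L.direction z.linear.ker :=
    disjoint_direction_ker_linear_of_map_ne hL z hv₀ hx hxp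
  have hheight : z (f x) = z (f y) := (hf x (hLΓ x hx) hxp).1.trans (hf y (hLΓ y hy) hyp).1.symm
  have hspan : f x -ᵥ f y ∈ ℝ ∙ ((![0, p 1, p 2] : E3) -ᵥ p) :=
    vsub_mem_span_of_mem_line_of_map_eq (p := p) hdisj hv₀ rfl hx hy
      (hf.apply_mem_line (hLΓ x hx) hxp) (hf.apply_mem_line (hLΓ y hy) hyp) hheight
  obtain ⟨r, hr⟩ := Submodule.mem_span_singleton.mp hspan
  have hcoord : r * (p 1 - p 1) = f x 1 - f y 1 := congrFun hr 1
  rwa [sub_self, mul_zero, eq_comm, sub_eq_zero] at hcoord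

/-- With `Γ = {x = 0}`, `Ω = {z = 0}` and `p = (p₁, p₂, p₃)`, `p₁, p₃ > 0`: every affine
line `L ⊆ Γ` through `v₀ = (0, p₂, p₃)` distinct from the vanishing line
`{(0, y, p₃) : y ∈ ℝ}` of `Γ` is mapped by the central projection `f` into an affine line
of `Ω` parallel to the `x`-axis, i.e. onto points with `z = 0` and a common
`y`-coordinate; consequently the image lines of all such lines are pairwise parallel. -/
theorem centralProj_lines_through_v0
    (p : E3) (hp1 : 0 < p 0) (hp3 : 0 < p 2)
    (f : E3 → E3) (hf : IsCentralProjC p f)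
    (L : AffineSubspace ℝ E3) (hL : IsLine L)
    (hLΓ : ∀ x ∈ L, x 0 = 0)
    (hv0 : (![0, p 1, p 2] : E3) ∈ L)
    (hLn : (L : Set E3) ≠ {v : E3 | v 0 = 0 ∧ v 2 = p 2}) :
    ∃ c : ℝ, ∀ x ∈ L, x 2 ≠ p 2 → (f x) 1 = c ∧ (f x) 2 = 0 := by
  by_cases h : ∃ x₀ ∈ L, x₀ 2 ≠ p 2
  · obtain ⟨x₀, hx₀, hx₀p⟩ := h
    exact ⟨f x₀ 1, fun x hx hxp ↦ ⟨hf.coord_one_apply_eq hL.2 hLΓ hv0 hx hx₀ hxp hx₀p,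
      (hf x (hLΓ x hx) hxp).1⟩⟩
  · push Not at h
    exact ⟨0, fun x hx hxp ↦ absurd (h x hx) hxp⟩
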